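/- arXiv:2102.08448 — 2 statements merged into one kernel-verified Lean document; each statement's English description precedes it below -/
import Mathlib

section
/- The set of matrices A ∈ Sp(2n, ℝ) whose characteristic polynomial has 2n pairwise distinct complex roots (equivalently, whose characteristic polynomial is separable) is open and dense in Sp(2n, ℝ). -/
open Matrix

/-- The standard symplectic matrix `J = [[0, Iₙ], [−Iₙ, 0]]` on `ℝ^{2n}`,
indexed by `Fin (2 * n)`. -/
noncomputable def stdJ (n : ℕ) : Matrix (Fin (2 * n)) (Fin (2 * n)) ℝ :=
  Matrix.of fun i j =>
    if (j : ℕ) = (i : ℕ) + n then 1 else if (i : ℕ) = (j : ℕ) + n then -1 else 0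

/-- The symplectic group `Sp(2n, ℝ)` as a subtype of matrices, with the subspace
topology inherited from the space of real `2n × 2n` matrices. -/
abbrev SpMat (n : ℕ) : Type :=
  {M : Matrix (Fin (2 * n)) (Fin (2 * n)) ℝ // Mᵀ * stdJ n * M = stdJ n}

/-!
Every symplectic matrix over a field is a product of symplectic shears and of block diagonal
matrices `diag(T, T⁻ᵀ)` with `T` a transvection, and each of these factors lies on a polynomial path
of symplectic matrices starting at `1`. Hence any two symplectic matrices `M`, `N` are joined by a
path `γ(t)` whose entries are polynomials in `t`. If the characteristic polynomial of `N` is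
separable, then its resultant with its derivative, computed along `γ`, is a nonzero polynomial
in `t`, so it vanishes for finitely many `t` only. All other `γ(t)` have separable characteristic
polynomial, and those with `t → 0` converge to `M`.
-/

open Polynomial Topology
open SymplecticGroup (fromBlocks_mem_iff)

theorem map_eval_X_smul_map_C {m n R : Type*} [CommSemiring R] (t : R) (Z : Matrix m n R) :
    ((X : R[X]) • Z.map C).map (eval t) = t • Z := by
  ext i j
  simp [mul_comm t]

section CommRing

variable {l R : Type*} [Fintype l] [DecidableEq l] [CommRing R]

theorem fromBlocks_one_zero_one_mem_symplecticGroup {Z : Matrix l l R} (hZ : Z.IsSymm) :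
    fromBlocks 1 Z 0 1 ∈ symplecticGroup l R := by
  simp [fromBlocks_mem_iff, hZ.eq]

theorem fromBlocks_one_zero_mem_symplecticGroup {Y : Matrix l l R} (hY : Y.IsSymm) :
    fromBlocks 1 0 Y 1 ∈ symplecticGroup l R := by
  simp [fromBlocks_mem_iff, hY.eq]

theorem fromBlocks_zero_zero_mem_symplecticGroup_iff {A D : Matrix l l R} :
    fromBlocks A 0 0 D ∈ symplecticGroup l R ↔ Aᵀ * D = 1 := by
  simp [fromBlocks_mem_iff]

variable (l R) in
/-- The symplectic matrices `γ(1)`, where `γ(t)` is a symplectic matrix with entries polynomial in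
`t` such that `γ(0) = 1`. The path `γ` is encoded as a symplectic matrix over `R[X]`. -/
noncomputable def polynomialPathSubmonoid : Submonoid (Matrix (l ⊕ l) (l ⊕ l) R) :=
  (symplecticGroup l R[X] ⊓ MonoidHom.mker (evalRingHom (0 : R)).mapMatrix).map
    (evalRingHom (1 : R)).mapMatrix

theorem mem_polynomialPathSubmonoid_iff {M : Matrix (l ⊕ l) (l ⊕ l) R} :
    M ∈ polynomialPathSubmonoid l R ↔
      ∃ γ ∈ symplecticGroup l R[X], γ.map (eval 0) = 1 ∧ γ.map (eval 1) = M := by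
  simp [polynomialPathSubmonoid, Submonoid.mem_map, MonoidHom.mem_mker, and_assoc]

theorem fromBlocks_one_zero_one_mem_polynomialPathSubmonoid {Z : Matrix l l R} (hZ : Z.IsSymm) :
    fromBlocks 1 Z 0 1 ∈ polynomialPathSubmonoid l R := by
  refine mem_polynomialPathSubmonoid_iff.2 ⟨fromBlocks 1 ((X : R[X]) • Z.map C) 0 1,
    fromBlocks_one_zero_one_mem_symplecticGroup ((hZ.map C).smul X), ?_, ?_⟩ <;>
  simp [fromBlocks_map, map_eval_X_smul_map_C]

theorem fromBlocks_one_zero_mem_polynomialPathSubmonoid {Y : Matrix l l R} (hY : Y.IsSymm) :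
    fromBlocks 1 0 Y 1 ∈ polynomialPathSubmonoid l R := by
  refine mem_polynomialPathSubmonoid_iff.2 ⟨fromBlocks 1 0 ((X : R[X]) • Y.map C) 1,
    fromBlocks_one_zero_mem_symplecticGroup ((hY.map C).smul X), ?_, ?_⟩ <;>
  simp [fromBlocks_map, map_eval_X_smul_map_C]

theorem fromBlocks_transvection_mem_polynomialPathSubmonoid {i j : l} (hij : i ≠ j) (c : R) :
    fromBlocks (transvection i j c) 0 0 (transvection i j c)⁻¹ᵀ ∈ polynomialPathSubmonoid l R := by
  have inv_eq : (transvection i j c)⁻¹ = transvection i j (-c) :=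
    inv_eq_right_inv (by simp [transvection_mul_transvection_same _ _ hij])
  have map_eval (t : R) (p : R[X]) :
      (transvection i j p).map (eval t) = transvection i j (eval t p) := by
    simp [transvection, Matrix.map_add, ← coe_evalRingHom]
  refine mem_polynomialPathSubmonoid_iff.2
    ⟨fromBlocks (transvection i j (X * C c)) 0 0 (transvection i j (-(X * C c)))ᵀ,
      fromBlocks_zero_zero_mem_symplecticGroup_iff.2 ?_, ?_, ?_⟩
  · rw [← transpose_mul, transvection_mul_transvection_same _ _ hij]
    simp
  · simp [fromBlocks_map, transpose_map, map_eval]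
  · simp [fromBlocks_map, transpose_map, map_eval, inv_eq]

theorem fromBlocks_isSymm_mem_polynomialPathSubmonoid {S : Matrix l l R} (hS : S.IsSymm)
    (hu : IsUnit S.det) : fromBlocks S 0 0 S⁻¹ ∈ polynomialPathSubmonoid l R := by
  -- This is `w(S) w(-1)` with `w(S) = [[1, S], [0, 1]] [[1, 0], [-S⁻¹, 1]] [[1, S], [0, 1]]`.
  have factorization : fromBlocks S 0 0 S⁻¹ =
      fromBlocks 1 S 0 1 * fromBlocks 1 0 (-S⁻¹) 1 * fromBlocks 1 (S - 1) 0 1 *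
        fromBlocks 1 0 1 1 * fromBlocks 1 (-1) 0 1 := by
    simp [fromBlocks_multiply, Matrix.mul_sub, S.mul_nonsing_inv hu, S.nonsing_inv_mul hu]
  have upper {Z : Matrix l l R} (hZ : Z.IsSymm) :=
    fromBlocks_one_zero_one_mem_polynomialPathSubmonoid hZ
  have lower {Y : Matrix l l R} (hY : Y.IsSymm) :=
    fromBlocks_one_zero_mem_polynomialPathSubmonoid hY
  rw [factorization]
  exact mul_mem (mul_mem (mul_mem (mul_mem (upper hS) (lower hS.inv.neg))
    (upper (hS.sub isSymm_one))) (lower isSymm_one)) (upper isSymm_one.neg)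

theorem exists_lowerDiagonalUpper_of_mem_symplecticGroup {A B C D : Matrix l l R}
    (hM : fromBlocks A B C D ∈ symplecticGroup l R) (hA : IsUnit A.det) :
    ∃ Y Z : Matrix l l R, Y.IsSymm ∧ Z.IsSymm ∧
      fromBlocks A B C D = fromBlocks 1 0 Y 1 * fromBlocks A 0 0 A⁻¹ᵀ * fromBlocks 1 Z 0 1 := by
  have hMt : fromBlocks Aᵀ Cᵀ Bᵀ Dᵀ ∈ symplecticGroup l R := by
    simpa [fromBlocks_transpose] using SymplecticGroup.transpose_mem hM
  obtain ⟨hAC, -, hAD⟩ := fromBlocks_mem_iff.1 hM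
  obtain ⟨hAB, -, -⟩ := fromBlocks_mem_iff.1 hMt
  simp only [transpose_transpose] at hAB
  have := invertibleOfIsUnitDet A hA
  have hY : (C * A⁻¹).IsSymm := calc
    (C * A⁻¹)ᵀ = Aᵀ⁻¹ * (Cᵀ * A) * A⁻¹ := by simp [transpose_nonsing_inv, Matrix.mul_assoc]
    _ = C * A⁻¹ := by rw [← hAC, inv_mul_cancel_left_of_invertible]
  have hZ : (A⁻¹ * B).IsSymm := calc
    (A⁻¹ * B)ᵀ = A⁻¹ * (A * Bᵀ) * Aᵀ⁻¹ := by simp [transpose_nonsing_inv]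
    _ = A⁻¹ * B := by rw [hAB, ← Matrix.mul_assoc, mul_inv_cancel_right_of_invertible]
  have schur : D - C * A⁻¹ * B = A⁻¹ᵀ := calc
    D - C * A⁻¹ * B = Aᵀ⁻¹ * (Aᵀ * D - Cᵀ * B) := by
      rw [← hY.eq]
      simp [transpose_nonsing_inv, Matrix.mul_sub, Matrix.mul_assoc]
    _ = A⁻¹ᵀ := by rw [hAD, Matrix.mul_one, transpose_nonsing_inv]
  exact ⟨C * A⁻¹, A⁻¹ * B, hY, hZ, by
    simpa [schur] using fromBlocks_eq_of_invertible₁₁ A B C D⟩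

end CommRing

section Field

variable {l K : Type*} [Fintype l] [DecidableEq l] [Field K]

theorem fromBlocks_transpose_inv_mem_polynomialPathSubmonoid {A : Matrix l l K} (hA : A.det ≠ 0) :
    fromBlocks A 0 0 A⁻¹ᵀ ∈ polynomialPathSubmonoid l K := by
  refine diagonal_transvection_induction_of_det_ne_zero
    (fun A ↦ fromBlocks A 0 0 A⁻¹ᵀ ∈ polynomialPathSubmonoid l K) A hA
    (fun d hd ↦ ?diagonal) (fun T ↦ ?transvection) (fun A B _ _ hA hB ↦ ?mul)
  case diagonal =>
    rw [(isSymm_diagonal d).inv.eq]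
    exact fromBlocks_isSymm_mem_polynomialPathSubmonoid (isSymm_diagonal d) hd.isUnit
  case transvection => exact fromBlocks_transvection_mem_polynomialPathSubmonoid T.hij T.c
  case mul => simpa [fromBlocks_multiply, Matrix.mul_inv_rev] using mul_mem hA hB

theorem isUnit_add_sub_mul_mul {P Q : Matrix l l K} (hPP : P * P = P)
    (hQP : Qᵀ * P = P * Q) (hker : ∀ v, Q *ᵥ v = 0 → P *ᵥ v = 0 → v = 0) :
    IsUnit (Q + (P - P * Q) * P) := by
  have hPQP : P * Q * P = P * Q := by rw [← hQP, Matrix.mul_assoc, hPP]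
  rw [Matrix.sub_mul, hPP, hPQP, ← mulVec_injective_iff_isUnit, ← coe_mulVecLin,
    injective_iff_map_eq_zero]
  intro v hv
  replace hv : Q *ᵥ v + (P *ᵥ v - P *ᵥ Q *ᵥ v) = 0 := by
    simpa [add_mulVec, sub_mulVec] using hv
  have hPv : P *ᵥ v = 0 := by
    have hPPQ : P * (P * Q) = P * Q := by rw [← Matrix.mul_assoc, hPP]
    simpa [mulVec_add, mulVec_sub, hPP, hPPQ] using congrArg (P *ᵥ ·) hv
  have hPQv : P *ᵥ Q *ᵥ v = 0 := by
    rw [mulVec_mulVec, ← hQP, ← mulVec_mulVec, hPv, mulVec_zero]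
  exact hker v (by simpa [hPv, hPQv] using hv) hPv

theorem exists_isSymm_isUnit_add_mul {A C : Matrix l l K} (hAC : Aᵀ * C = Cᵀ * A)
    (hker : ∀ v, A *ᵥ v = 0 → C *ᵥ v = 0 → v = 0) :
    ∃ X : Matrix l l K, X.IsSymm ∧ IsUnit (A + X * C) := by
  obtain ⟨V, U, e, hV, hU, hVCU⟩ := exists_rank_normal_form C
  have := hV.invertible
  have := hU.invertible
  set P := V * C * U with hP
  set Q := V⁻¹ᵀ * A * U with hQ
  have hP_symm : P.IsSymm := by
    rw [hVCU]
    exact (IsSymm.fromBlocks isSymm_one (by simp) isSymm_zero).submatrix e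
  have hPP : P * P = P := by
    rw [hVCU, submatrix_mul_equiv, fromBlocks_multiply]
    simp
  have hQP : Qᵀ * P = P * Q := calc
    Qᵀ * P = Uᵀ * (Aᵀ * C) * U := by simp [hP, hQ, Matrix.mul_assoc]
    _ = Pᵀ * Q := by simp [hP, hQ, hAC, Matrix.mul_assoc, transpose_nonsing_inv]
    _ = P * Q := by rw [hP_symm.eq]
  have hker' (v) (hQv : Q *ᵥ v = 0) (hPv : P *ᵥ v = 0) : v = 0 := by
    have hAU : A * U = Vᵀ * Q := by simp [hQ, Matrix.mul_assoc, transpose_nonsing_inv]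
    have hCU : C * U = V⁻¹ * P := by simp [hP, Matrix.mul_assoc]
    have hUv : U *ᵥ v = 0 := hker _
      (by rw [mulVec_mulVec, hAU, ← mulVec_mulVec, hQv, mulVec_zero])
      (by rw [mulVec_mulVec, hCU, ← mulVec_mulVec, hPv, mulVec_zero])
    exact mulVec_injective_of_isUnit hU (hUv.trans (mulVec_zero U).symm)
  have hPQ_symm : (P * Q).IsSymm := by rw [IsSymm, transpose_mul, hP_symm.eq, hQP]
  refine ⟨Vᵀ * (P - P * Q) * V, ?_, ?_⟩
  · rw [IsSymm, transpose_mul, transpose_mul, transpose_transpose, (hP_symm.sub hPQ_symm).eq,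
      ← Matrix.mul_assoc]
  · have hAXC : A + Vᵀ * (P - P * Q) * V * C = Vᵀ * (Q + (P - P * Q) * P) * U⁻¹ := by
      have hA : A = Vᵀ * Q * U⁻¹ := by simp [hQ, Matrix.mul_assoc, transpose_nonsing_inv]
      have hVC : V * C = P * U⁻¹ := by simp [hP]
      rw [Matrix.mul_add, Matrix.add_mul, ← hA, Matrix.mul_assoc _ V, hVC]
      simp only [Matrix.mul_assoc]
    rw [hAXC]
    exact ((V.isUnit_transpose.2 hV).mul (isUnit_add_sub_mul_mul hPP hQP hker')).mul
      (isUnit_nonsing_inv_iff.2 hU)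

theorem symplecticGroup_le_polynomialPathSubmonoid :
    symplecticGroup l K ≤ polynomialPathSubmonoid l K := by
  intro M hM
  obtain ⟨A, B, C, D, rfl⟩ : ∃ A B C D, M = fromBlocks A B C D :=
    ⟨_, _, _, _, (fromBlocks_toBlocks M).symm⟩
  obtain ⟨hAC, -, hAD⟩ := fromBlocks_mem_iff.1 hM
  have hker (v) (hAv : A *ᵥ v = 0) (hCv : C *ᵥ v = 0) : v = 0 := by
    have hDA : Dᵀ * A - Bᵀ * C = 1 := by simpa using congrArg transpose hAD
    simpa [sub_mulVec, ← mulVec_mulVec, hAv, hCv] using (congrArg (· *ᵥ v) hDA).symm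
  obtain ⟨S, hS, hunit⟩ := exists_isSymm_isUnit_add_mul hAC hker
  have hSM : fromBlocks 1 S 0 1 * fromBlocks A B C D = fromBlocks (A + S * C) (B + S * D) C D := by
    simp [fromBlocks_multiply]
  have hdet := (isUnit_iff_isUnit_det _).1 hunit
  obtain ⟨Y, Z, hY, hZ, hYZ⟩ := exists_lowerDiagonalUpper_of_mem_symplecticGroup
    (hSM ▸ mul_mem (fromBlocks_one_zero_one_mem_symplecticGroup hS) hM) hdet
  have factorization : fromBlocks A B C D = fromBlocks 1 (-S) 0 1 *
      (fromBlocks 1 0 Y 1 * fromBlocks (A + S * C) 0 0 (A + S * C)⁻¹ᵀ * fromBlocks 1 Z 0 1) := by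
    rw [← hYZ, ← hSM, ← Matrix.mul_assoc]
    simp [fromBlocks_multiply]
  rw [factorization]
  exact mul_mem (fromBlocks_one_zero_one_mem_polynomialPathSubmonoid hS.neg)
    (mul_mem (mul_mem (fromBlocks_one_zero_mem_polynomialPathSubmonoid hY)
      (fromBlocks_transpose_inv_mem_polynomialPathSubmonoid hdet.ne_zero))
      (fromBlocks_one_zero_one_mem_polynomialPathSubmonoid hZ))

theorem exists_polynomial_path {M N : Matrix (l ⊕ l) (l ⊕ l) K} (hM : M ∈ symplecticGroup l K)
    (hN : N ∈ symplecticGroup l K) :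
    ∃ γ ∈ symplecticGroup l K[X], γ.map (eval 0) = M ∧ γ.map (eval 1) = N := by
  lift M to symplecticGroup l K using hM
  lift N to symplecticGroup l K using hN
  obtain ⟨γ, hγ, hγ₀, hγ₁⟩ := mem_polynomialPathSubmonoid_iff.1
    (symplecticGroup_le_polynomialPathSubmonoid (M⁻¹ * N).2)
  have map_eval (t : K) : (M.1.map C * γ).map (eval t) = M.1 * γ.map (eval t) := by
    rw [← coe_evalRingHom, Matrix.map_mul, Matrix.map_map]
    simp [Function.comp_def]
  refine ⟨M.1.map C * γ, mul_mem (SymplecticGroup.map_mem M.2 C) hγ, ?_, ?_⟩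
  · rw [map_eval, hγ₀, Matrix.mul_one]
  · rw [map_eval, hγ₁, ← Submonoid.coe_mul, mul_inv_cancel_left]

theorem exists_units_injOn_zpow [Infinite K] (n : ℕ) :
    ∃ x : Kˣ, Set.InjOn (fun a : ℤ ↦ x ^ a) (Set.Icc (-n) n) := by
  have hp : (X * (X ^ (2 * n).factorial - 1) : K[X]) ≠ 0 :=
    mul_ne_zero X_ne_zero (X_pow_sub_C_ne_zero (2 * n).factorial_pos 1)
  obtain ⟨x, hx⟩ := Set.Infinite.nonempty (finite_setOfPred_isRoot hp).infinite_compl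
  obtain ⟨hx₀, hx_pow⟩ : x ≠ 0 ∧ x ^ (2 * n).factorial - 1 ≠ 0 := by simpa using hx
  lift x to Kˣ using hx₀.isUnit
  refine ⟨x, fun a ha b hb hab ↦ by_contra fun hne ↦ hx_pow ?_⟩
  rw [Set.mem_Icc] at ha hb
  have x_pow_natAbs : x ^ (a - b).natAbs = 1 := by
    rwa [pow_natAbs_eq_one, _root_.zpow_sub, mul_inv_eq_one]
  obtain ⟨q, hq⟩ : (a - b).natAbs ∣ (2 * n).factorial :=
    Nat.dvd_factorial (by lia) (by lia)
  rw [hq, pow_mul, ← Units.val_pow_eq_pow_val, x_pow_natAbs, Units.val_one, one_pow, sub_self]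

theorem exists_mem_symplecticGroup_charpoly_separable [Infinite K] :
    ∃ M ∈ symplecticGroup l K, M.charpoly.Separable := by
  obtain ⟨x, hx⟩ := exists_units_injOn_zpow (K := K) (Fintype.card l)
  let e (i : l) : ℤ := Fintype.equivFin l i + 1
  have e_injective : e.Injective := fun i j hij ↦ (Fintype.equivFin l).injective (Fin.ext (by lia))
  have e_pos (i) : 0 < e i := by lia
  have e_le (i) : e i ≤ Fintype.card l := by have := (Fintype.equivFin l i).isLt; lia
  have elim_injective : (Sum.elim e (-e)).Injective :=
    e_injective.sumElim (neg_injective.comp e_injective) fun i j ↦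
      ((neg_neg_of_pos (e_pos j)).trans (e_pos i)).ne'
  have elim_mem : ∀ i, Sum.elim e (-e) i ∈ Set.Icc (-Fintype.card l : ℤ) (Fintype.card l)
    | .inl i => ⟨(neg_nonpos.2 (Nat.cast_nonneg _)).trans (e_pos i).le, e_le i⟩
    | .inr i => ⟨neg_le_neg (e_le i), (neg_neg_of_pos (e_pos i)).le.trans (Nat.cast_nonneg _)⟩
  let pow (a : ℤ) : K := (x ^ a : Kˣ)
  have pow_mul_pow_neg (a : ℤ) : pow a * pow (-a) = 1 := by simpa [pow] using (x ^ a).mul_inv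
  refine ⟨fromBlocks (diagonal (pow ∘ e)) 0 0 (diagonal (pow ∘ (-e))), ?_, ?_⟩
  · rw [fromBlocks_zero_zero_mem_symplecticGroup_iff, diagonal_transpose, diagonal_mul_diagonal]
    simp [pow_mul_pow_neg]
  · rw [fromBlocks_diagonal, ← Sum.comp_elim, charpoly_diagonal, separable_prod_X_sub_C_iff]
    exact fun i j hij ↦ elim_injective (hx (elim_mem i) (elim_mem j) (Units.ext hij))

end Field

section Resultant

variable {m : Type*} [Fintype m] [DecidableEq m]

/-- The resultant of the characteristic polynomial of `M` with its derivative: a polynomial in the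
entries of `M` which detects repeated eigenvalues. The derivative is given the formal degree
`Fintype.card m`, independently of the characteristic, so that no natural subtraction occurs. -/
noncomputable def charpolyResultant {R : Type*} [CommRing R] (M : Matrix m m R) : R :=
  resultant M.charpoly (derivative M.charpoly) (Fintype.card m) (Fintype.card m)

theorem charpolyResultant_map {R S : Type*} [CommRing R] [CommRing S] (f : R →+* S)
    (M : Matrix m m R) : charpolyResultant (M.map f) = f (charpolyResultant M) := by
  rw [charpolyResultant, charpoly_map, derivative_map, resultant_map_map, charpolyResultant]

theorem charpoly_separable_iff {K : Type*} [Field K] (M : Matrix m m K) :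
    M.charpoly.Separable ↔ charpolyResultant M ≠ 0 := by
  have hM := M.charpoly_monic
  have hdeg : (derivative M.charpoly).natDegree ≤ M.charpoly.natDegree :=
    (natDegree_derivative_le _).trans (Nat.sub_le _ _)
  have hres : charpolyResultant M = resultant M.charpoly (derivative M.charpoly) := by
    rw [charpolyResultant, ← M.charpoly_natDegree_eq_dim]
    nth_rw 2 [← Nat.add_sub_cancel' hdeg]
    rw [resultant_add_right_deg _ _ _ _ _ le_rfl, hM.coeff_natDegree, one_pow, one_mul]
  rw [hres, ← isUnit_iff_ne_zero, isUnit_resultant_iff_isCoprime hM, Polynomial.Separable]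

theorem continuous_charpolyResultant {R : Type*} [CommRing R] [TopologicalSpace R]
    [IsTopologicalRing R] : Continuous (charpolyResultant : Matrix m m R → R) := by
  have eval_generic (M : Matrix m m R) : charpolyResultant M =
      MvPolynomial.eval (fun p : m × m ↦ M p.1 p.2) (charpolyResultant (mvPolynomialX m m R)) := by
    rw [← charpolyResultant_map]
    exact congrArg charpolyResultant (mvPolynomialX_mapMatrix_eval M).symm
  simp only [funext eval_generic]
  exact (MvPolynomial.continuous_eval _).comp (by fun_prop)

theorem isOpen_setOf_charpoly_separable {K : Type*} [Field K] [TopologicalSpace K]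
    [IsTopologicalRing K] [T1Space K] : IsOpen {M : Matrix m m K | M.charpoly.Separable} := by
  simp only [charpoly_separable_iff]
  exact isOpen_compl_singleton.preimage continuous_charpolyResultant

theorem finite_setOf_not_charpoly_separable {K : Type*} [Field K] {γ : Matrix m m K[X]} {t₀ : K}
    (h : (γ.map (eval t₀)).charpoly.Separable) :
    {t | ¬ (γ.map (eval t)).charpoly.Separable}.Finite := by
  have eval_resultant (t : K) :
      charpolyResultant (γ.map (eval t)) = (charpolyResultant γ).eval t :=
    charpolyResultant_map (evalRingHom t) γ
  simp only [charpoly_separable_iff, eval_resultant, not_not] at h ⊢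
  refine finite_setOfPred_isRoot fun h₀ ↦ h ?_
  rw [h₀, eval_zero]

end Resultant

theorem dense_setOf_charpoly_separable {l K : Type*} [Fintype l] [DecidableEq l] [Field K]
    [TopologicalSpace K] [IsTopologicalRing K] [T1Space K] [(𝓝[≠] (0 : K)).NeBot] :
    Dense {A : symplecticGroup l K | A.1.charpoly.Separable} := by
  intro A
  have : Infinite K := Set.infinite_univ_iff.1 (infinite_of_mem_nhds (0 : K) Filter.univ_mem)
  obtain ⟨N, hN, hN_sep⟩ := exists_mem_symplecticGroup_charpoly_separable (l := l) (K := K)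
  obtain ⟨γ, hγ, hγ₀, rfl⟩ := exists_polynomial_path A.2 hN
  let path (t : K) : symplecticGroup l K :=
    ⟨γ.map (eval t), SymplecticGroup.map_mem hγ (evalRingHom t)⟩
  have path_continuous : Continuous path :=
    (continuous_matrix fun i j ↦ (γ i j).continuous).subtype_mk _
  have path_zero : path 0 = A := Subtype.ext hγ₀
  have separable_near_zero : ∀ᶠ t in 𝓝[≠] 0, (path t).1.charpoly.Separable :=
    ((finite_setOf_not_charpoly_separable hN_sep).eventually_cofinite_notMem.mono
      fun t ↦ not_not.1).filter_mono (nhdsNE_le_cofinite 0)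
  exact mem_closure_of_tendsto
    ((path_continuous.tendsto' 0 A path_zero).mono_left nhdsWithin_le_nhds) separable_near_zero

theorem stmt9_general (l K : Type*) [Fintype l] [DecidableEq l] [Field K]
    [TopologicalSpace K] [IsTopologicalRing K] [T1Space K] [(𝓝[≠] (0 : K)).NeBot] :
    IsOpen {A : symplecticGroup l K | A.1.charpoly.Separable} ∧
      Dense {A : symplecticGroup l K | A.1.charpoly.Separable} :=
  ⟨isOpen_setOf_charpoly_separable.preimage continuous_subtype_val,
    dense_setOf_charpoly_separable⟩

/-- The identification of the block index type of `symplecticGroup (Fin n) ℝ` with `Fin (2 * n)`. -/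
def finSumFinEquivTwoMul (n : ℕ) : Fin n ⊕ Fin n ≃ Fin (2 * n) :=
  finSumFinEquiv.trans (finCongr (two_mul n).symm)

theorem stdJ_eq_reindex_neg_J (n : ℕ) :
    stdJ n = reindex (finSumFinEquivTwoMul n) (finSumFinEquivTwoMul n) (-J (Fin n) ℝ) := by
  apply (reindex (finSumFinEquivTwoMul n) (finSumFinEquivTwoMul n)).symm.injective
  rw [Equiv.symm_apply_apply]
  ext (i | i) (j | j) <;>
    simp only [stdJ, finSumFinEquivTwoMul, J, reindex_symm, reindex_apply, submatrix_apply,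
      Matrix.neg_apply, of_apply, fromBlocks_apply₁₁, fromBlocks_apply₁₂, fromBlocks_apply₂₁,
      fromBlocks_apply₂₂, Matrix.zero_apply, Matrix.one_apply, Equiv.symm_symm, Equiv.trans_apply,
      finSumFinEquiv_apply_left, finSumFinEquiv_apply_right, finCongr_apply, Fin.val_cast,
      Fin.val_castAdd, Fin.val_natAdd, Fin.ext_iff] <;>
    grind

theorem mem_symplecticGroup_iff_reindex {n : ℕ} (M : Matrix (Fin n ⊕ Fin n) (Fin n ⊕ Fin n) ℝ) :
    M ∈ symplecticGroup (Fin n) ℝ ↔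
      (reindex (finSumFinEquivTwoMul n) (finSumFinEquivTwoMul n) M)ᵀ * stdJ n *
        reindex (finSumFinEquivTwoMul n) (finSumFinEquivTwoMul n) M = stdJ n := by
  rw [SymplecticGroup.mem_iff', stdJ_eq_reindex_neg_J]
  simp only [reindex_apply, transpose_submatrix, submatrix_mul_equiv]
  rw [← reindex_apply, ← reindex_apply, (reindex _ _).injective.eq_iff, Matrix.mul_neg,
    Matrix.neg_mul, neg_inj]

/-- Mathlib's symplectic group, given by `M J Mᵀ = J` with `J = [[0, -1], [1, 0]]` on the block
index type `Fin n ⊕ Fin n`, is homeomorphic by reindexing to `SpMat n`, given by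
`Mᵀ (-J) M = -J`. -/
def symplecticGroupHomeomorph (n : ℕ) : symplecticGroup (Fin n) ℝ ≃ₜ SpMat n :=
  Homeomorph.subtype
    { toEquiv := reindex (finSumFinEquivTwoMul n) (finSumFinEquivTwoMul n)
      continuous_toFun := continuous_id.matrix_reindex _ _
      continuous_invFun := continuous_id.matrix_submatrix _ _ }
    mem_symplecticGroup_iff_reindex

theorem setOf_nodup_roots_eq_preimage (n : ℕ) :
    {A : SpMat n | (((A : Matrix (Fin (2 * n)) (Fin (2 * n)) ℝ).charpoly.map
      (algebraMap ℝ ℂ)).roots).Nodup} =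
    (symplecticGroupHomeomorph n).symm ⁻¹' {A | A.1.charpoly.Separable} := by
  ext A
  obtain ⟨M, rfl⟩ := (symplecticGroupHomeomorph n).surjective A
  have charpoly_eq : (symplecticGroupHomeomorph n M).1.charpoly = M.1.charpoly :=
    charpoly_reindex _ _
  rw [Set.mem_preimage, Homeomorph.symm_apply_apply]
  simp only [Set.mem_ofPred_eq, charpoly_eq]
  exact nodup_aroots_iff_of_splits M.1.charpoly_monic.ne_zero (IsAlgClosed.splits _)

/-- The set of symplectic matrices whose characteristic polynomial has
`2n` pairwise distinct complex roots (no repeated roots over `ℂ`) is open and dense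
in `Sp(2n, ℝ)`. -/
theorem stmt9 (n : ℕ) :
    IsOpen {A : SpMat n |
        (((A : Matrix (Fin (2 * n)) (Fin (2 * n)) ℝ).charpoly.map
          (algebraMap ℝ ℂ)).roots).Nodup} ∧
    Dense {A : SpMat n |
        (((A : Matrix (Fin (2 * n)) (Fin (2 * n)) ℝ).charpoly.map
          (algebraMap ℝ ℂ)).roots).Nodup} := by
  obtain ⟨isOpen_separable, dense_separable⟩ := stmt9_general (Fin n) ℝ
  rw [setOf_nodup_roots_eq_preimage]
  exact ⟨isOpen_separable.preimage (symplecticGroupHomeomorph n).symm.continuous,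
    dense_separable.preimage (symplecticGroupHomeomorph n).symm.isOpenMap⟩
end

section
/- For every n ≥ 1 there exists a matrix A ∈ Sp(2n, ℝ) such that A maps the subspace E = span{e_1, …, e_n} (the span of the first n standard basis vectors of ℝ^{2n}) to itself, and the n×n matrix B representing the restriction of A to E in the basis e_1, …, e_n satisfies: for all subsets I, I' ⊆ {1, …, n} with |I| + |I'| = n, the exterior product (∧^{|I|}B)(e_I) ∧ e_{I'} is nonzero in ∧^n ℝ^n, where e_I denotes the wedge of the basis vectors e_i for i ∈ I in increasing order. -/
/-!
For `A = diag(B, B⁻ᵀ)`, which is symplectic for every invertible `B`, the wedge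
`(∧^|I| B)(e_I) ∧ e_{I'}` is, up to sign, the minor of `B` with columns `I` and rows `I'ᶜ`, times
the volume element. So it suffices that all minors of `B` are nonzero, as for a Cauchy matrix
`1 / (xᵢ - yⱼ)` with distinct nodes. The minors of a Cauchy matrix are themselves Cauchy
determinants, nonzero because a polynomial of degree `< k` with `k` roots vanishes.
-/

open Matrix

/-- For `I = {i₁ < … < i_k} ⊆ {1, …, n}`, the wedge `e_I = e_{i₁} ∧ … ∧ e_{i_k}` of
standard basis vectors of `ℝⁿ`, as an element of the exterior algebra of `ℝⁿ`
(it lies in the `k`-th exterior power). -/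
noncomputable def eWedge (n : ℕ) (I : Finset (Fin n)) :
    ExteriorAlgebra ℝ (Fin n → ℝ) :=
  ((I.sort (· ≤ ·)).map fun i => ExteriorAlgebra.ι ℝ (Pi.single i (1 : ℝ))).prod

section TotallyNonsingular

variable {m n R : Type*} [CommRing R]

/-- A matrix is totally nonsingular if all its minors, of every order, are nonzero. As in
`Matrix.IsTotallyUnimodular`, rows and columns are selected by injective maps, in any order. -/
def IsTotallyNonsingular (A : Matrix m n R) : Prop :=
  ∀ (k : ℕ) (f : Fin k → m) (g : Fin k → n), f.Injective → g.Injective →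
    (A.submatrix f g).det ≠ 0

theorem IsTotallyNonsingular.det_ne_zero {n : ℕ} {A : Matrix (Fin n) (Fin n) R}
    (hA : IsTotallyNonsingular A) : A.det ≠ 0 :=
  hA n id id Function.injective_id Function.injective_id

end TotallyNonsingular

section CauchyMatrix

variable {m n F : Type*} [Field F]

/-- The Cauchy matrix with entries `1 / (x i - y j)`; an entry with `x i = y j` is `0`. -/
def cauchyMatrix (x : m → F) (y : n → F) : Matrix m n F :=
  Matrix.of fun i j => (x i - y j)⁻¹

-- A kernel vector `w` gives, by the barycentric formula, the interpolant taking the value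
-- `w j / nodalWeight j` at `y j`, of degree `< #n` and vanishing at the `#n` points `x i`.
theorem det_cauchyMatrix_ne_zero [Fintype n] [DecidableEq n] {x y : n → F}
    (hx : x.Injective) (hy : y.Injective) (hxy : ∀ i j, x i ≠ y j) :
    (cauchyMatrix x y).det ≠ 0 := by
  intro hdet
  obtain ⟨w, hw, hCw⟩ := Matrix.exists_mulVec_eq_zero_iff.mpr hdet
  set P := Lagrange.interpolate Finset.univ y fun j => w j / Lagrange.nodalWeight Finset.univ y j
  have weight_ne_zero (j : n) : Lagrange.nodalWeight Finset.univ y j ≠ 0 :=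
    Lagrange.nodalWeight_ne_zero hy.injOn (Finset.mem_univ j)
  have eval_P (i : n) : P.eval (x i) = 0 := by
    have hsum : ∑ j, (x i - y j)⁻¹ * w j = 0 := congrFun hCw i
    rw [Lagrange.eval_interpolate_not_at_node _ fun j _ => hxy i j, ← mul_zero, ← hsum]
    congr! 2 with j
    have := weight_ne_zero j
    field_simp
  have hP : P = 0 :=
    Polynomial.eq_zero_of_degree_lt_of_eval_index_eq_zero _ hx.injOn
      (Lagrange.degree_interpolate_lt _ hy.injOn) fun i _ => eval_P i
  refine hw (funext fun j => ?_)
  have hj : P.eval (y j) = w j / _ :=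
    Lagrange.eval_interpolate_at_node _ hy.injOn (Finset.mem_univ j)
  rw [hP, Polynomial.eval_zero, eq_comm, div_eq_zero_iff] at hj
  exact hj.resolve_right (weight_ne_zero j)

theorem isTotallyNonsingular_cauchyMatrix {x : m → F} {y : n → F}
    (hx : x.Injective) (hy : y.Injective) (hxy : ∀ i j, x i ≠ y j) :
    IsTotallyNonsingular (cauchyMatrix x y) := fun _ _ _ hf hg =>
  det_cauchyMatrix_ne_zero (hx.comp hf) (hy.comp hg) fun _ _ => hxy _ _

theorem exists_isTotallyNonsingular (m n F : Type*) [Countable m] [Countable n] [Field F]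
    [Infinite F] :
    ∃ A : Matrix m n F, IsTotallyNonsingular A := by
  obtain ⟨φ⟩ : Nonempty (m ⊕ n ↪ F) :=
    (nonempty_embedding_nat (m ⊕ n)).map (·.trans (Infinite.natEmbedding F))
  exact ⟨cauchyMatrix (φ ∘ Sum.inl) (φ ∘ Sum.inr), isTotallyNonsingular_cauchyMatrix
    (φ.injective.comp Sum.inl_injective) (φ.injective.comp Sum.inr_injective)
    fun _ _ => φ.injective.ne Sum.inl_ne_inr⟩

end CauchyMatrix

section Twisting

variable {K V : Type*} [Field K] [AddCommGroup V] [Module K V]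

theorem ιMulti_ne_zero_of_linearIndependent {k : ℕ} {v : Fin k → V}
    (hv : LinearIndependent K v) : ExteriorAlgebra.ιMulti K k v ≠ 0 := by
  have h := (exteriorPower.ιMulti_family_linearIndependent_field (n := k) hv).ne_zero
    (Set.powersetCard.ofFinEmbEquiv (RelEmbedding.refl _))
  rw [exteriorPower.ιMulti_family, Equiv.symm_apply_apply] at h
  exact Subtype.coe_ne_coe.mpr h

theorem ιMulti_mul_ιMulti_ne_zero {p q : ℕ} {a : Fin p → V} {b : Fin q → V}
    (h : LinearIndependent K (Sum.elim a b)) :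
    ExteriorAlgebra.ιMulti K p a * ExteriorAlgebra.ιMulti K q b ≠ 0 := by
  rw [ExteriorAlgebra.ιMulti_mul_ιMulti]
  apply ιMulti_ne_zero_of_linearIndependent
  rw [← Fin.append_comp_sumElim] at h
  exact (linearIndependent_equiv finSumFinEquiv).mp h

variable {m n : Type*} [Fintype m]

-- The projection onto the coordinates outside the range of `g` kills the second family and turns
-- the first one into the columns of a square submatrix of `A`.
theorem IsTotallyNonsingular.linearIndependent_col_basisFun {A : Matrix m n K}
    (hA : IsTotallyNonsingular A) {p q : ℕ} (hpq : p + q = Fintype.card m)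
    {f : Fin p → n} {g : Fin q → m} (hf : f.Injective) (hg : g.Injective) :
    LinearIndependent K (Sum.elim (A.col ∘ f) (Pi.basisFun K m ∘ g)) := by
  classical
  have card_compl : Fintype.card {i // i ∉ Set.range g} = p := by
    rw [Fintype.card_subtype_compl, Set.card_range_of_injective hg]
    simp [← hpq]
  let r : Fin p → m := Subtype.val ∘ (Fintype.equivFinOfCardEq card_compl).symm
  have proj_cols : LinearIndependent K (LinearMap.funLeft K K r ∘ A.col ∘ f) :=
    Matrix.linearIndependent_cols_iff_isUnit.mpr <| (Matrix.isUnit_iff_isUnit_det _).mpr <|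
      (hA p r f (Subtype.val_injective.comp (Equiv.injective _)) hf).isUnit
  have basis_le_ker : Submodule.span K (Set.range (Pi.basisFun K m ∘ g)) ≤
      LinearMap.ker (LinearMap.funLeft K K r) := by
    rw [Submodule.span_le]
    rintro _ ⟨j, rfl⟩
    ext i
    have hi : r i ≠ g j := fun h => ((Fintype.equivFinOfCardEq card_compl).symm i).2 ⟨j, h.symm⟩
    simp [hi]
  exact (proj_cols.of_comp _).sum_type ((Pi.basisFun K m).linearIndependent.comp g hg)
    ((Submodule.range_ker_disjoint proj_cols).mono_right basis_le_ker)

theorem basis_exteriorAlgebra_eq_ιMulti {ι R M : Type*} [LinearOrder ι] [CommRing R]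
    [AddCommGroup M] [Module R M] (b : Module.Basis ι R M) (I : Finset ι) :
    b.ExteriorAlgebra I = ExteriorAlgebra.ιMulti R I.card (b ∘ I.orderEmbOfFin rfl) :=
  ExteriorAlgebra.basis_apply_ofCard b rfl

theorem IsTotallyNonsingular.map_wedge_mul_wedge_ne_zero [LinearOrder m] {A : Matrix m m K}
    (hA : IsTotallyNonsingular A) {I I' : Finset m} (h : I.card + I'.card = Fintype.card m) :
    ExteriorAlgebra.map A.mulVecLin ((Pi.basisFun K m).ExteriorAlgebra I) *
      (Pi.basisFun K m).ExteriorAlgebra I' ≠ 0 := by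
  rw [basis_exteriorAlgebra_eq_ιMulti, basis_exteriorAlgebra_eq_ιMulti,
    ExteriorAlgebra.map_apply_ιMulti]
  have map_basis : A.mulVecLin ∘ Pi.basisFun K m = A.col := by
    ext i j
    simp
  rw [← Function.comp_assoc, map_basis]
  exact ιMulti_mul_ιMulti_ne_zero <| hA.linearIndependent_col_basisFun h
    (I.orderEmbOfFin rfl).injective (I'.orderEmbOfFin rfl).injective

theorem eWedge_eq_basisFun_exteriorAlgebra (n : ℕ) (I : Finset (Fin n)) :
    eWedge n I = (Pi.basisFun ℝ (Fin n)).ExteriorAlgebra I := by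
  rw [basis_exteriorAlgebra_eq_ιMulti, ExteriorAlgebra.ιMulti_apply, eWedge]
  congr 1
  refine List.ext_getElem (by simp) fun i hi hi' => ?_
  simp [Finset.orderEmbOfFin_apply]

end Twisting

section Symplectic

/-- The indexing of a basis `e₁, …, eₙ, f₁, …, fₙ` by `Fin (2 * n)`: the `eᵢ` come from the left
summand and the `fᵢ` from the right one. -/
def finSumFinTwoMul (n : ℕ) : Fin n ⊕ Fin n ≃ Fin (2 * n) :=
  finSumFinEquiv.trans (finCongr (two_mul n).symm)

theorem castLE_eq_finSumFinTwoMul_inl {n : ℕ} (h : n ≤ 2 * n) (i : Fin n) :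
    Fin.castLE h i = finSumFinTwoMul n (Sum.inl i) := rfl

theorem val_finSumFinTwoMul_inl {n : ℕ} (i : Fin n) :
    (finSumFinTwoMul n (Sum.inl i) : ℕ) = i := rfl

theorem val_finSumFinTwoMul_inr {n : ℕ} (i : Fin n) :
    (finSumFinTwoMul n (Sum.inr i) : ℕ) = i + n := Nat.add_comm n i

theorem stdJ_eq_neg_reindex_J (n : ℕ) :
    stdJ n = -Matrix.reindexAlgEquiv ℝ ℝ (finSumFinTwoMul n) (Matrix.J (Fin n) ℝ) := by
  ext a b
  obtain ⟨a, rfl⟩ := (finSumFinTwoMul n).surjective a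
  obtain ⟨b, rfl⟩ := (finSumFinTwoMul n).surjective b
  rcases a with a | a <;> rcases b with b | b <;>
    simp only [stdJ, Matrix.J, Matrix.of_apply, Matrix.neg_apply, Matrix.coe_reindexAlgEquiv,
      Matrix.reindex_apply, Matrix.submatrix_apply, Equiv.symm_apply_apply,
      Matrix.fromBlocks_apply₁₁, Matrix.fromBlocks_apply₁₂, Matrix.fromBlocks_apply₂₁,
      Matrix.fromBlocks_apply₂₂, Matrix.zero_apply, Matrix.one_apply, Fin.ext_iff,
      val_finSumFinTwoMul_inl, val_finSumFinTwoMul_inr] <;> grind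

theorem transpose_reindex_mul_stdJ_mul_reindex {n : ℕ}
    {S : Matrix (Fin n ⊕ Fin n) (Fin n ⊕ Fin n) ℝ} (hS : S ∈ Matrix.symplecticGroup (Fin n) ℝ) :
    (Matrix.reindex (finSumFinTwoMul n) (finSumFinTwoMul n) S)ᵀ * stdJ n *
      Matrix.reindex (finSumFinTwoMul n) (finSumFinTwoMul n) S = stdJ n := by
  rw [Matrix.transpose_reindex, stdJ_eq_neg_reindex_J, ← Matrix.coe_reindexAlgEquiv ℝ ℝ,
    Matrix.mul_neg, Matrix.neg_mul, ← map_mul, ← map_mul, SymplecticGroup.mem_iff'.mp hS]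

theorem fromBlocks_zero_zero_mem_symplecticGroup {l R : Type*} [Fintype l] [DecidableEq l]
    [CommRing R] {B : Matrix l l R} (hB : IsUnit B.det) :
    Matrix.fromBlocks B 0 0 B⁻¹ᵀ ∈ Matrix.symplecticGroup l R := by
  simp [SymplecticGroup.fromBlocks_mem_iff, ← Matrix.transpose_mul, Matrix.nonsing_inv_mul _ hB]

theorem map_mulVecLin_span_single_le {ι m R : Type*} [Fintype m] [DecidableEq m] [CommSemiring R]
    {A : Matrix m m R} {f : ι → m} (hA : ∀ a ∉ Set.range f, ∀ i, A a (f i) = 0) :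
    Submodule.map A.mulVecLin (Submodule.span R (Set.range fun i => Pi.single (f i) 1)) ≤
      Submodule.span R (Set.range fun i => Pi.single (f i) 1) := by
  rw [Submodule.map_span_le]
  rintro _ ⟨i, rfl⟩
  rw [Matrix.mulVecLin_apply, Matrix.mulVec_single_one, pi_eq_sum_univ' (A.col (f i))]
  refine Submodule.sum_mem _ fun a _ => ?_
  by_cases ha : a ∈ Set.range f
  · obtain ⟨k, rfl⟩ := ha
    exact Submodule.smul_mem _ _ <| Submodule.subset_span ⟨k, by ext; simp [Pi.single_apply]⟩
  · simp [Matrix.col_apply, hA a ha i]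

end Symplectic

/-- For every `n ≥ 1` there is a symplectic matrix `A ∈ Sp(2n, ℝ)`
preserving the subspace `E = span{e_1, …, e_n}` spanned by the first `n` standard
basis vectors, such that the `n × n` matrix `B` representing `A` restricted to `E`
satisfies the twisting condition: for all `I, I' ⊆ {1, …, n}` with `|I| + |I'| = n`,
the wedge `(∧^{|I|} B)(e_I) ∧ e_{I'}` is nonzero in `∧ⁿ ℝⁿ`. -/
theorem stmt12 (n : ℕ) (hn : 1 ≤ n) :
    ∃ A : Matrix (Fin (2 * n)) (Fin (2 * n)) ℝ,
      Aᵀ * stdJ n * A = stdJ n ∧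
      Submodule.map A.mulVecLin
          (Submodule.span ℝ
            (Set.range fun i : Fin n =>
              Pi.single (Fin.castLE (by omega) i) (1 : ℝ))) ≤
        Submodule.span ℝ
          (Set.range fun i : Fin n =>
            Pi.single (Fin.castLE (by omega) i) (1 : ℝ)) ∧
      ∀ I I' : Finset (Fin n), I.card + I'.card = n →
        ExteriorAlgebra.map
            (A.submatrix (Fin.castLE (by omega : n ≤ 2 * n))
              (Fin.castLE (by omega : n ≤ 2 * n))).mulVecLin
            (eWedge n I) * eWedge n I' ≠ 0 := by
  obtain ⟨B, hB⟩ := exists_isTotallyNonsingular (Fin n) (Fin n) ℝ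
  let S : Matrix (Fin n ⊕ Fin n) (Fin n ⊕ Fin n) ℝ := Matrix.fromBlocks B 0 0 B⁻¹ᵀ
  have hS : S ∈ Matrix.symplecticGroup (Fin n) ℝ :=
    fromBlocks_zero_zero_mem_symplecticGroup hB.det_ne_zero.isUnit
  refine ⟨Matrix.reindex (finSumFinTwoMul n) (finSumFinTwoMul n) S,
    transpose_reindex_mul_stdJ_mul_reindex hS, map_mulVecLin_span_single_le ?_, fun I I' h => ?_⟩
  · intro a ha i
    obtain ⟨a | a, rfl⟩ := (finSumFinTwoMul n).surjective a
    · exact absurd ⟨a, rfl⟩ ha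
    · simp [castLE_eq_finSumFinTwoMul_inl, S]
  · have submatrix_eq : (Matrix.reindex (finSumFinTwoMul n) (finSumFinTwoMul n) S).submatrix
        (Fin.castLE (by omega)) (Fin.castLE (by omega)) = B := by
      ext i j
      simp [castLE_eq_finSumFinTwoMul_inl, S]
    rw [submatrix_eq, eWedge_eq_basisFun_exteriorAlgebra, eWedge_eq_basisFun_exteriorAlgebra]
    exact hB.map_wedge_mul_wedge_ne_zero (by simpa using h)
end
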